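/- Define h : (ℕ → Bool) → ℝ by h(x) = Σ_{i=0}^∞ 2·χ(x(i))/3^{i+1}, where χ(true) = 1 and χ(false) = 0. Let (x_k)_{k∈ℕ} be a sequence of elements of ℕ → Bool and let y be a real number that is a cluster point of the sequence (h(x_k))_{k∈ℕ}, i.e. for every ε > 0 and every s there exists k ≥ s with |h(x_k) − y| < ε. Then there exists x : ℕ → Bool with h(x) = y such that x is a cluster point of (x_k) in Cantor space, i.e. for every n and every s there exists k ≥ s with x_k(i) = x(i) for all i ≤ n. -/

import Mathlib

/-- The Cantor middle-thirds embedding of Cantor space into `[0,1]`. -/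
noncomputable def cantorMap (x : ℕ → Bool) : ℝ :=
  ∑' i : ℕ, 2 * (if x i then (1 : ℝ) else 0) / 3 ^ (i + 1)

/-!
As a series of ternary digits `0` and `2`, `cantorMap` is continuous on the compact space
`ℕ → Bool`, hence proper, and cluster points lift along proper maps. The cylinder
`{w | ∀ i ≤ n, w i = z i}` is a neighbourhood of `z`, so a sequence clustering at `z` meets it
infinitely often.
-/

open Filter Topology

theorem mapClusterPt_atTop_iff_dist {ι α : Type*} [Preorder ι] [IsDirectedOrder ι] [Nonempty ι]
    [PseudoMetricSpace α] {u : ι → α} {a : α} :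
    MapClusterPt a atTop u ↔ ∀ ε > 0, ∀ s, ∃ k ≥ s, dist (u k) a < ε := by
  simp only [Metric.nhds_basis_ball.mapClusterPt_iff_frequently, frequently_atTop, Metric.mem_ball]

theorem exists_mapClusterPt_of_isProperMap {ι X Y : Type*} [TopologicalSpace X]
    [TopologicalSpace Y] {f : X → Y} (hf : IsProperMap f) {l : Filter ι} {u : ι → X} {y : Y}
    (h : MapClusterPt y l (f ∘ u)) : ∃ x, f x = y ∧ MapClusterPt x l u :=
  hf.clusterPt_of_mapClusterPt (ℱ := map u l) h

theorem eventually_nhds_forall_mem_eq {ι : Type*} {X : ι → Type*} [∀ i, TopologicalSpace (X i)]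
    [∀ i, DiscreteTopology (X i)] {s : Set ι} (hs : s.Finite) (z : ∀ i, X i) :
    ∀ᶠ w in 𝓝 z, ∀ i ∈ s, w i = z i :=
  (eventually_all_finite hs).2 fun i _ ↦
    (continuous_apply i).continuousAt.eventually_mem ((isOpen_discrete {z i}).mem_nhds rfl)

theorem cantorMap_eq_ofDigits (x : ℕ → Bool) :
    cantorMap x = Real.ofDigits fun i ↦ cond (x i) (2 : Fin 3) 0 := by
  refine tsum_congr fun i ↦ ?_
  cases hxi : x i <;> simp [Real.ofDigitsTerm, hxi, div_eq_mul_inv]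

theorem continuous_cantorMap : Continuous cantorMap := by
  rw [funext cantorMap_eq_ofDigits]
  have continuous_digit : Continuous fun b : Bool ↦ cond b (2 : Fin 3) 0 :=
    continuous_of_discreteTopology
  exact Real.continuous_ofDigits.comp
    (continuous_pi fun i ↦ continuous_digit.comp (continuous_apply i))

/-- If `y` is a cluster point of the sequence `(h(x_k))` of real numbers, then
`y = h(x)` for some `x : ℕ → Bool` which is a cluster point of `(x_k)` in
Cantor space. -/
theorem cantorMap_clusterPoint (x : ℕ → ℕ → Bool) (y : ℝ)
    (hy : ∀ ε : ℝ, 0 < ε → ∀ s : ℕ, ∃ k ≥ s, |cantorMap (x k) - y| < ε) :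
    ∃ z : ℕ → Bool, cantorMap z = y ∧
      ∀ n : ℕ, ∀ s : ℕ, ∃ k ≥ s, ∀ i ≤ n, x k i = z i := by
  have cluster_image : MapClusterPt y atTop (cantorMap ∘ x) := mapClusterPt_atTop_iff_dist.2 hy
  obtain ⟨z, map_z, cluster_z⟩ :=
    exists_mapClusterPt_of_isProperMap continuous_cantorMap.isProperMap cluster_image
  refine ⟨z, map_z, fun n ↦ frequently_atTop.1 ?_⟩
  exact cluster_z.frequently (eventually_nhds_forall_mem_eq (Set.finite_Iic n) z)
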